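/- (Theorem 3.2, part 1.) There exists σ₀ > 0 such that for every σ ≥ σ₀ the following holds. Let {Z^(k)} ⊆ (ℝ^{K×K})^{N−1} be any (inexact PBCD) sequence and let {Z̄^(k)} be its block-optimal sequence. Assume: (i) {f_β(Z̄^(k))} is nonincreasing, with limit F̄, and f_β(Z̄^(k)) > F̄ for all k ≥ 1; (ii) Σ_{k=1}^∞ ‖Z̄^(k) − Z^(k)‖_F < ∞. Then the sequence {Z^(k)} converges to a KKT point of the penalized problem (P_β). -/

import Mathlib

open Matrix Finset Filter Topology

noncomputable section

/-- Trace inner product `⟨A,B⟩ = Tr(AᵀB)` on `K×K` real matrices. -/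
def mip {K : ℕ} (A B : Matrix (Fin K) (Fin K) ℝ) : ℝ := (Aᵀ * B).trace

/-- The section `S = {W : We = 𝟙, WᵀΞϱ = ϱ, Tr W = 0, W ≥ 0}` of the feasible region. -/
def Sset {K : ℕ} (e ϱ : Fin K → ℝ) : Set (Matrix (Fin K) (Fin K) ℝ) :=
  {W | W.mulVec e = (fun _ => 1) ∧ Wᵀ.mulVec (fun j => e j * ϱ j) = ϱ ∧
    W.trace = 0 ∧ ∀ a b, 0 ≤ W a b}

/-- The discretized repulsive energy
`f(Z) = Σ_i ⟨X_i, ΛΞCΞ⟩ + Σ_{i<j} ⟨X_i, ΞΛX_jΞCΞ⟩` (blocks indexed by `Fin m`, `m = N−1`). -/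
def fE {K m : ℕ} (e ϱ : Fin K → ℝ) (C : Matrix (Fin K) (Fin K) ℝ)
    (Z : Fin m → Matrix (Fin K) (Fin K) ℝ) : ℝ :=
  (∑ i, mip (Z i) (diagonal ϱ * diagonal e * C * diagonal e)) +
    ∑ i, ∑ j ∈ Finset.Ioi i,
      mip (Z i) (diagonal e * diagonal ϱ * Z j * diagonal e * C * diagonal e)

/-- The `ℓ₁`-penalized energy `f_β(Z) = f(Z) + β Σ_{i<j} ⟨X_i, X_j⟩`. -/
def fB {K m : ℕ} (e ϱ : Fin K → ℝ) (C : Matrix (Fin K) (Fin K) ℝ) (β : ℝ)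
    (Z : Fin m → Matrix (Fin K) (Fin K) ℝ) : ℝ :=
  fE e ϱ C Z + β * ∑ i, ∑ j ∈ Finset.Ioi i, mip (Z i) (Z j)

/-- The block gradient
`∇_{X_i} f_β(Z) = ΛΞCΞ + Σ_{j<i} ΛΞX_jΞCΞ + Σ_{j>i} ΞΛX_jΞCΞ + β Σ_{j≠i} X_j`. -/
def gradB {K m : ℕ} (e ϱ : Fin K → ℝ) (C : Matrix (Fin K) (Fin K) ℝ) (β : ℝ)
    (Z : Fin m → Matrix (Fin K) (Fin K) ℝ) (i : Fin m) : Matrix (Fin K) (Fin K) ℝ :=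
  diagonal ϱ * diagonal e * C * diagonal e
    + ∑ j ∈ Finset.Iio i, diagonal ϱ * diagonal e * Z j * diagonal e * C * diagonal e
    + ∑ j ∈ Finset.Ioi i, diagonal e * diagonal ϱ * Z j * diagonal e * C * diagonal e
    + β • ∑ j ∈ Finset.univ.erase i, Z j

/-- `Z* ∈ S^{N−1}` is a KKT point of the penalized problem `(P_β)` if
`⟨∇_{X_i} f_β(Z*), X − X*_i⟩ ≥ 0` for all `X ∈ S` and all blocks `i`. -/
def IsKKT {K m : ℕ} (e ϱ : Fin K → ℝ) (C : Matrix (Fin K) (Fin K) ℝ) (β : ℝ)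
    (Z : Fin m → Matrix (Fin K) (Fin K) ℝ) : Prop :=
  (∀ i, Z i ∈ Sset e ϱ) ∧
    ∀ i, ∀ X ∈ Sset e ϱ, 0 ≤ mip (gradB e ϱ C β Z i) (X - Z i)

/-- The `i`-th block objective of PBCD at outer iterate `Zold` (with the already-updated
blocks taken from `Znew`):
`X ↦ f_β(Znew_{<i}, X, Zold_{>i}) + (σ/2)‖X − Zold_i‖_F²`. -/
def blockObj {K m : ℕ} (e ϱ : Fin K → ℝ) (C : Matrix (Fin K) (Fin K) ℝ) (β σ : ℝ)
    (Zold Znew : Fin m → Matrix (Fin K) (Fin K) ℝ) (i : Fin m)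
    (X : Matrix (Fin K) (Fin K) ℝ) : ℝ :=
  fB e ϱ C β (fun j => if j < i then Znew j else if j = i then X else Zold j)
    + σ / 2 * mip (X - Zold i) (X - Zold i)

/-- `Zseq` is an exact PBCD sequence: for every `k` and every block `i` (in order),
`X_i^{(k+1)}` is the (unique) global solution of the `i`-th block problem. -/
def IsPBCD {K m : ℕ} (e ϱ : Fin K → ℝ) (C : Matrix (Fin K) (Fin K) ℝ) (β σ : ℝ)
    (Zseq : ℕ → Fin m → Matrix (Fin K) (Fin K) ℝ) : Prop :=
  ∀ k i, Zseq (k + 1) i ∈ Sset e ϱ ∧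
    ∀ X ∈ Sset e ϱ,
      blockObj e ϱ C β σ (Zseq k) (Zseq (k + 1)) i (Zseq (k + 1) i) ≤
        blockObj e ϱ C β σ (Zseq k) (Zseq (k + 1)) i X

/-- `Zbar` is the block-optimal sequence of `Zseq`: `X̄_i^{(k+1)}` is the (unique) global
solution of the `i`-th block problem built from the iterates of `Zseq` themselves. -/
def IsBlockOpt {K m : ℕ} (e ϱ : Fin K → ℝ) (C : Matrix (Fin K) (Fin K) ℝ) (β σ : ℝ)
    (Zseq Zbar : ℕ → Fin m → Matrix (Fin K) (Fin K) ℝ) : Prop :=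
  ∀ k i, Zbar (k + 1) i ∈ Sset e ϱ ∧
    ∀ X ∈ Sset e ϱ,
      blockObj e ϱ C β σ (Zseq k) (Zseq (k + 1)) i (Zbar (k + 1) i) ≤
        blockObj e ϱ C β σ (Zseq k) (Zseq (k + 1)) i X

/-- Frobenius norm of a block tuple `Z ∈ (ℝ^{K×K})^m`. -/
def nZ {K m : ℕ} (Z : Fin m → Matrix (Fin K) (Fin K) ℝ) : ℝ :=
  Real.sqrt (∑ i, mip (Z i) (Z i))

lemma preimage_const {X Y : Type*} [NormedAddCommGroup X] [NormedSpace ℝ X] [FiniteDimensional ℝ X]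
    [NormedAddCommGroup Y] [NormedSpace ℝ Y] (T0 : X →ₗ[ℝ] Y) :
    ∃ C : ℝ, 0 < C ∧ ∀ x, ∃ u, T0 u = T0 x ∧ ‖u‖ ≤ C * ‖T0 x‖ := by
  let T : X →L[ℝ] LinearMap.range T0 := LinearMap.toContinuousLinearMap T0.rangeRestrict
  have hT : Function.Surjective T := LinearMap.surjective_rangeRestrict T0
  have hTT : ∀ d, ((T d : LinearMap.range T0) : Y) = T0 d := fun d => rfl
  have : CompleteSpace X := FiniteDimensional.complete ℝ X
  have : CompleteSpace (LinearMap.range T0) := FiniteDimensional.complete ℝ _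
  obtain ⟨C, hC, hpre⟩ := T.exists_preimage_norm_le hT
  refine ⟨C, hC, fun x => ?_⟩
  obtain ⟨u, hu, hun⟩ := hpre (T x)
  exact ⟨u, by rw [← hTT, ← hTT, hu], hun⟩

lemma quad_sub_const {V : Type*} [NormedAddCommGroup V] [NormedSpace ℝ V] [FiniteDimensional ℝ V]
    (B : V →ₗ[ℝ] V →ₗ[ℝ] ℝ) (hB : ∀ x y, B x y = B y x) (L : Submodule ℝ V) :
    ∃ C : ℝ, 0 ≤ C ∧ ∀ d ∈ L, ∀ w : V →L[ℝ] ℝ, (∀ x ∈ L, B d x = w x) → B d d ≤ C * ‖w‖ ^ 2 := by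
  let T0 : L →ₗ[ℝ] (L →L[ℝ] ℝ) :=
    { toFun := fun d => LinearMap.toContinuousLinearMap ((B (d : V)).comp L.subtype)
      map_add' := by intro a b; ext x; simp
      map_smul' := by intro a b; ext x; simp }
  have hT0 : ∀ d x : L, T0 d x = B (d : V) (x : V) := fun d x => rfl
  obtain ⟨C, hC, hpre⟩ := preimage_const (X := L) (Y := L →L[ℝ] ℝ) T0
  refine ⟨C, hC.le, fun d hd w hw => ?_⟩
  obtain ⟨u, hu', hun⟩ := hpre ⟨d, hd⟩
  have hw' : T0 ⟨d, hd⟩ = w.comp L.subtypeL := by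
    ext x; simp [hT0, hw x x.2]
  have hn : ‖T0 ⟨d, hd⟩‖ ≤ ‖w‖ := by
    rw [hw']
    refine (ContinuousLinearMap.opNorm_comp_le _ _).trans ?_
    have := Submodule.norm_subtypeL_le L
    nlinarith [norm_nonneg w]
  have e1 : B d d = w u := by
    rw [← hw u u.2, hB d u]
    have := congrArg (fun q => q (⟨d, hd⟩ : L)) hu'
    simp only [hT0] at this
    exact this.symm
  rw [e1]
  calc w u ≤ ‖w u‖ := le_abs_self _
    _ ≤ ‖w‖ * ‖(u : V)‖ := w.le_opNorm _
    _ ≤ ‖w‖ * (C * ‖w‖) := by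
        gcongr
        exact hun.trans (by gcongr)
    _ = _ := by ring

lemma kl_aux {V : Type*} [NormedAddCommGroup V] [NormedSpace ℝ V] [FiniteDimensional ℝ V]
    {J : Type*} [Finite J] (B : V →ₗ[ℝ] V →ₗ[ℝ] ℝ) (hB : ∀ x y, B x y = B y x)
    (L : J → Submodule ℝ V) (f : V → ℝ) (g : V → V → ℝ)
    (hg : ∀ x y d, g y d = g x d + B (y - x) d)
    (hf : ∀ x y, f y - f x = g x (y - x) + 1 / 2 * B (y - x) (y - x))
    (z : ℕ → V) (j : ℕ → J) (v : ℕ → V →L[ℝ] ℝ)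
    (hz : ∀ k k', j k = j k' → z k - z k' ∈ L (j k))
    (hv : ∀ k, ∀ d ∈ L (j k), g (z k) d = v k d)
    (hv0 : Tendsto v atTop (𝓝 0)) (F : ℝ) (hF : Tendsto (fun k => f (z k)) atTop (𝓝 F))
    (R : ℝ) (hR : ∀ k, ‖z k‖ ≤ R) :
    ∃ C : ℝ, 0 ≤ C ∧ ∀ᶠ k in atTop, f (z k) - F ≤ C * ‖v k‖ ^ 2 := by
  classical
  have := Fintype.ofFinite J
  choose C hC0 hC using fun a => quad_sub_const B hB (L a)
  refine ⟨∑ a, C a, Finset.sum_nonneg fun a _ => hC0 a, ?_⟩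
  have hinf : ∀ᶠ k in atTop, ∃ᶠ k' in atTop, j k' = j k := by
    have : ∀ a : J, ∀ᶠ k in atTop, j k = a → ∃ᶠ k' in atTop, j k' = a := by
      intro a
      by_cases h : ∃ᶠ k' in atTop, j k' = a
      · exact Eventually.of_forall fun _ _ => h
      · rw [not_frequently] at h
        filter_upwards [h] with k hk hk'
        exact absurd hk' hk
    filter_upwards [eventually_all.2 this] with k hk
    exact hk _ rfl
  filter_upwards [hinf] with k hk
  have hCle : C (j k) ≤ ∑ a, C a :=
    Finset.single_le_sum (f := C) (fun a _ => hC0 a) (Finset.mem_univ _)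
  have key : ∀ k', j k' = j k →
      f (z k) - f (z k') - ‖v k'‖ * (R + R) - 1 / 2 * ((∑ a, C a) * ‖v k - v k'‖ ^ 2) ≤ 0 := by
    intro k' hk'
    have hmem := hz k k' hk'.symm
    have h1 := hf (z k') (z k)
    have h2 : g (z k') (z k - z k') = v k' (z k - z k') := hv k' _ (hk' ▸ hmem)
    have h3 : B (z k - z k') (z k - z k') ≤ C (j k) * ‖v k - v k'‖ ^ 2 := by
      refine hC (j k) _ hmem _ fun x hx => ?_
      have a1 := hg (z k') (z k) x
      rw [hv k x hx, hv k' x (hk' ▸ hx)] at a1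
      simp [a1]
    have h4 : v k' (z k - z k') ≤ ‖v k'‖ * (R + R) :=
      (le_abs_self _).trans ((v k').le_opNorm _ |>.trans (by
        gcongr; exact (norm_sub_le _ _).trans (add_le_add (hR _) (hR _))))
    have h5 : C (j k) * ‖v k - v k'‖ ^ 2 ≤ (∑ a, C a) * ‖v k - v k'‖ ^ 2 := by gcongr
    linarith
  have hlim : Tendsto (fun k' => f (z k) - f (z k') - ‖v k'‖ * (R + R)
      - 1 / 2 * ((∑ a, C a) * ‖v k - v k'‖ ^ 2)) atTop
      (𝓝 (f (z k) - F - ‖(0 : V →L[ℝ] ℝ)‖ * (R + R)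
        - 1 / 2 * ((∑ a, C a) * ‖v k - 0‖ ^ 2))) := by
    refine ((tendsto_const_nhds.sub hF).sub (hv0.norm.mul_const _)).sub ?_
    exact (((tendsto_const_nhds.sub hv0).norm.pow 2).const_mul _).const_mul _
  have hle := le_of_tendsto_of_frequently hlim (hk.mono key)
  rw [norm_zero, sub_zero] at hle
  have : 0 ≤ (∑ a, C a) * ‖v k‖ ^ 2 :=
    mul_nonneg (Finset.sum_nonneg fun a _ => hC0 a) (sq_nonneg _)
  linarith

lemma summable_rec (D w : ℕ → ℝ) (hD : ∀ k, 0 ≤ D k) (hw : Summable w) (hw0 : ∀ k, 0 ≤ w k)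
    (h : ∀ k, D (k + 1) ≤ 1 / 2 * D k + w k) : Summable D := by
  refine summable_of_sum_range_le (c := 2 * D 0 + 2 * ∑' k, w k) hD fun n => ?_
  have h1 : ∑ k ∈ range n, D k ≤ 2 * D 0 + 2 * ∑ k ∈ range n, w k - 2 * D n := by
    induction n with
    | zero => simp
    | succ n ih => rw [sum_range_succ, sum_range_succ]; linarith [h n]
  have h2 := hw.sum_le_tsum (range n) (fun i _ => hw0 i)
  linarith [hD n]

lemma summable_main (a b C : ℝ) (ha : 0 < a) (hb : 0 ≤ b) (hC : 0 ≤ C) (D δ φ : ℕ → ℝ)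
    (hD : ∀ k, 0 ≤ D k) (hδ0 : ∀ k, 0 ≤ δ k) (hδ : Summable δ) (hφ0 : ∀ k, 0 ≤ φ k)
    (hφm : ∀ k, φ (k + 1) ≤ φ k)
    (h1 : ∀ k, a * D k ^ 2 ≤ φ k - φ (k + 1) + b * δ k * D k)
    (h2 : ∀ᶠ k in atTop, φ (k + 1) ≤ C * (D k + δ k) ^ 2) : Summable D := by
  obtain ⟨k0, hk0⟩ := eventually_atTop.1 h2
  rw [← summable_nat_add_iff k0]
  set s : ℕ → ℝ := fun k => √(φ k)
  have hs0 : ∀ k, 0 ≤ s k := fun k => Real.sqrt_nonneg _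
  have hsm : ∀ k, s (k + 1) ≤ s k := fun k => Real.sqrt_le_sqrt (hφm k)
  have hss : ∀ k, s k ^ 2 = φ k := fun k => Real.sq_sqrt (hφ0 k)
  have hsum_s : Summable fun k => s k - s (k + 1) := by
    refine summable_of_sum_range_le (c := s 0) (fun k => sub_nonneg.2 (hsm k)) fun n => ?_
    rw [sum_range_sub']; linarith [hs0 n]
  set P := 2 * √C / a with hP
  have hP0 : 0 ≤ P := by positivity
  refine summable_rec _ (fun k => 1 / 2 * δ (k + k0) + b / a * δ (k + k0 + 1)
    + P / 2 * (s (k + k0 + 1) - s (k + k0 + 2))) (fun k => hD _) ?_ ?_ ?_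
  · refine Summable.add (Summable.add ?_ ?_) ?_
    · exact ((summable_nat_add_iff k0).2 hδ).mul_left _
    · exact ((summable_nat_add_iff (k0 + 1)).2 hδ).mul_left _
    · exact ((summable_nat_add_iff (k0 + 1)).2 hsum_s).mul_left _
  · intro k
    have := hsm (k + k0 + 1)
    have := mul_nonneg (half_pos two_pos |>.le : (0:ℝ) ≤ 2 / 2) hP0
    have := mul_nonneg hP0 (sub_nonneg.2 (hsm (k + k0 + 1)))
    have := mul_nonneg (div_nonneg hb ha.le) (hδ0 (k + k0 + 1))
    have := hδ0 (k + k0)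
    linarith
  · intro k
    have e1 : k + 1 + k0 = k + k0 + 1 := by ring
    rw [e1]
    set n := k + k0
    have hn : s (n + 1) ≤ √C * (D n + δ n) := by
      refine Real.sqrt_le_iff.2 ⟨by have := hD n; have := hδ0 n; positivity, ?_⟩
      rw [mul_pow, Real.sq_sqrt hC]
      exact hk0 n (by omega)
    set q := D n + δ n
    have hq : 0 ≤ q := add_nonneg (hD n) (hδ0 n)
    set r := P * (s (n + 1) - s (n + 2))
    have hr : 0 ≤ r := mul_nonneg hP0 (sub_nonneg.2 (hsm (n + 1)))
    set p := b / a * δ (n + 1)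
    have hp : 0 ≤ p := mul_nonneg (div_nonneg hb ha.le) (hδ0 _)
    have h3 : D (n + 1) ^ 2 ≤ p * D (n + 1) + q * r := by
      have h4 := h1 (n + 1)
      have h5 : φ (n + 1) - φ (n + 1 + 1) ≤ 2 * (√C * q) * (s (n + 1) - s (n + 2)) := by
        rw [← hss, ← hss]
        have := hsm (n + 1)
        have h0 := hs0 (n + 2)
        have : (0:ℝ) ≤ (2 * (√C * q) - (s (n + 1) + s (n + 2))) * (s (n + 1) - s (n + 2)) :=
          mul_nonneg (by linarith [hsm (n + 1)]) (by linarith [hsm (n + 1)])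
        nlinarith
      have h6 : a * (p * D (n + 1) + q * r) = b * δ (n + 1) * D (n + 1)
          + 2 * (√C * q) * (s (n + 1) - s (n + 2)) := by
        simp only [p, r, hP]; field_simp
      have : a * D (n + 1) ^ 2 ≤ a * (p * D (n + 1) + q * r) := by rw [h6]; linarith
      exact le_of_mul_le_mul_left this ha
    have h7 : D (n + 1) ≤ p + (q + r) / 2 := by
      by_contra! hcon
      nlinarith [sq_nonneg (q - r), mul_pos (sub_pos.2 hcon) (sub_pos.2 hcon), mul_nonneg hp hq,
        mul_nonneg hp hr, mul_nonneg hp (sub_pos.2 hcon).le, mul_nonneg hq (sub_pos.2 hcon).le, mul_nonneg hr (sub_pos.2 hcon).le]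
    have h8 : P / 2 * (s (n + 1) - s (n + 2)) = r / 2 := by simp only [r]; ring
    rw [h8]
    simp only [q] at h7
    linarith

lemma sum_Iio_Ioi {m : ℕ} (a : Fin m → Fin m → ℝ) :
    ∑ i, ∑ j ∈ Iio i, a i j = ∑ i, ∑ j ∈ Ioi i, a j i := by
  refine Finset.sum_comm' ?_
  intro x y; simp

section abstractBlocks

variable {E : Type*} [NormedAddCommGroup E] [InnerProductSpace ℝ E]

/-- abstract block energy -/
def aF {m : ℕ} (c : E) (M : E →L[ℝ] E) (Z : Fin m → E) : ℝ :=
  (∑ i, inner ℝ (Z i) c) + ∑ i, ∑ j ∈ Ioi i, inner ℝ (Z i) (M (Z j))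

/-- mixed block gradient: earlier blocks from `x`, later blocks from `y` -/
def aG {m : ℕ} (c : E) (M : E →L[ℝ] E) (x y : Fin m → E) (i : Fin m) : E :=
  c + ∑ j ∈ Iio i, M (x j) + ∑ j ∈ Ioi i, M (y j)

lemma aF_sub {m : ℕ} (c : E) (M : E →L[ℝ] E) (hM : ∀ x y, inner ℝ (M x) y = inner ℝ x (M y))
    (x y : Fin m → E) :
    aF c M y - aF c M x = ∑ i, inner ℝ (aG c M x y i) (y i - x i) := by
  simp only [aF, aG, inner_add_left, inner_sub_right, sum_inner, sum_add_distrib, sum_sub_distrib]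
  rw [sum_Iio_Ioi (fun i j => inner ℝ (M (x j)) (y i)), sum_Iio_Ioi (fun i j => inner ℝ (M (x j)) (x i))]
  have e1 : ∀ i, inner ℝ c (y i) = inner ℝ (y i) c := fun i => real_inner_comm _ _
  have e2 : ∀ i, inner ℝ c (x i) = inner ℝ (x i) c := fun i => real_inner_comm _ _
  have e3 : ∀ i j, inner ℝ (M (y j)) (y i) = inner ℝ (y i) (M (y j)) := fun i j => real_inner_comm _ _
  have e4 : ∀ i j, inner ℝ (M (y j)) (x i) = inner ℝ (M (x i)) (y j) := fun i j => by
    rw [real_inner_comm, hM]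
  simp only [e1, e2, e3, e4]
  simp only [hM]
  ring

lemma aG_bound {m : ℕ} (c : E) (M : E →L[ℝ] E) (x y x' y' : Fin m → E) (i : Fin m) :
    ‖aG c M x y i - aG c M x' y' i‖ ≤ m * ‖M‖ * (‖x - x'‖ + ‖y - y'‖) := by
  have e : aG c M x y i - aG c M x' y' i =
      ∑ j ∈ Iio i, M ((x - x') j) + ∑ j ∈ Ioi i, M ((y - y') j) := by
    simp only [aG, Pi.sub_apply, map_sub, sum_sub_distrib]; abel
  have hb : ∀ (s : Finset (Fin m)) (u : Fin m → E), ‖∑ j ∈ s, M (u j)‖ ≤ m * ‖M‖ * ‖u‖ := by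
    intro s u
    calc ‖∑ j ∈ s, M (u j)‖ ≤ ∑ j ∈ s, ‖M‖ * ‖u‖ :=
          norm_sum_le_of_le _ fun j _ => (M.le_opNorm _).trans (by gcongr; exact norm_le_pi_norm u j)
      _ = s.card * (‖M‖ * ‖u‖) := by simp
      _ ≤ m * (‖M‖ * ‖u‖) := by
          gcongr
          simpa using Finset.card_le_univ s
      _ = _ := by ring
  rw [e, mul_add]
  exact (norm_add_le _ _).trans (add_le_add (hb _ _) (hb _ _))

/-- Hessian bilinear form -/
def aB {m : ℕ} (M : E →L[ℝ] E) : (Fin m → E) →ₗ[ℝ] (Fin m → E) →ₗ[ℝ] ℝ :=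
  LinearMap.mk₂ ℝ (fun x d => ∑ i, inner ℝ (aG 0 M x x i) (d i))
    (by
      intro x y d
      rw [← sum_add_distrib]
      refine sum_congr rfl fun i _ => ?_
      rw [← inner_add_left]
      congr 1
      simp only [aG, Pi.add_apply, map_add, sum_add_distrib]; abel)
    (by
      intro a x d
      rw [smul_eq_mul, mul_sum]
      refine sum_congr rfl fun i _ => ?_
      rw [← real_inner_smul_left]
      congr 1
      simp only [aG, Pi.smul_apply, map_smul, ← smul_sum, zero_add, smul_add])
    (by intro x d d'; simp [inner_add_right, sum_add_distrib])
    (by intro a x d; simp [real_inner_smul_right, mul_sum])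

lemma aB_apply {m : ℕ} (M : E →L[ℝ] E) (x d : Fin m → E) :
    aB M x d = ∑ i, inner ℝ (aG 0 M x x i) (d i) := rfl

lemma aB_symm {m : ℕ} (M : E →L[ℝ] E) (hM : ∀ x y, inner ℝ (M x) y = inner ℝ x (M y)) (x d : Fin m → E) :
    aB M x d = aB M d x := by
  simp only [aB_apply, aG, zero_add, inner_add_left, sum_inner, sum_add_distrib]
  rw [sum_Iio_Ioi (fun i j => inner ℝ (M (x j)) (d i)), sum_Iio_Ioi (fun i j => inner ℝ (M (d j)) (x i))]
  have e4 : ∀ i j, inner ℝ (M (d j)) (x i) = inner ℝ (M (x i)) (d j) := fun i j => by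
    rw [real_inner_comm, hM]
  have e5 : ∀ i j, inner ℝ (M (d i)) (x j) = inner ℝ (M (x j)) (d i) := fun i j => by
    rw [real_inner_comm, hM]
  simp only [e4]
  ring

lemma aF_quad {m : ℕ} (c : E) (M : E →L[ℝ] E) (hM : ∀ x y, inner ℝ (M x) y = inner ℝ x (M y))
    (x y : Fin m → E) :
    aF c M y - aF c M x = (∑ i, inner ℝ (aG c M x x i) ((y - x) i)) + 1 / 2 * aB M (y - x) (y - x) := by
  rw [aF_sub c M hM]
  have h1 : aB M (y - x) (y - x) = 2 * ∑ i, ∑ j ∈ Ioi i, inner ℝ (M ((y - x) j)) ((y - x) i) := by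
    generalize y - x = d
    simp only [aB_apply, aG, zero_add, inner_add_left, sum_inner, sum_add_distrib]
    rw [sum_Iio_Ioi (fun i j => inner ℝ (M (d j)) (d i))]
    have e4 : ∀ i j, inner ℝ (M (d i)) (d j) = inner ℝ (M (d j)) (d i) := fun i j => by
      rw [real_inner_comm, hM]
    rw [two_mul]
    congr 1
    exact sum_congr rfl fun i _ => sum_congr rfl fun j _ => e4 _ _
  rw [h1, ← mul_assoc, show (1 / 2 * 2 : ℝ) = 1 by norm_num, one_mul, ← sum_add_distrib]
  refine sum_congr rfl fun i _ => ?_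
  rw [← sum_inner, ← inner_add_left]
  congr 1
  simp only [aG, Pi.sub_apply, map_sub, sum_sub_distrib]; abel

lemma exists_block_norm_eq {m : ℕ} (hm : 0 < m) (d : Fin m → E) : ∃ i, ‖d‖ = ‖d i‖ := by
  have : Nonempty (Fin m) := ⟨⟨0, hm⟩⟩
  obtain ⟨i, -, hi⟩ := Finset.exists_max_image (univ : Finset (Fin m)) (fun i => ‖d i‖) univ_nonempty
  exact ⟨i, le_antisymm ((pi_norm_le_iff_of_nonneg (norm_nonneg _)).2 fun j => hi j (mem_univ _))
    (norm_le_pi_norm d i)⟩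

/-- First-order condition from block optimality. -/
lemma foc (S : Set E) (hconv : ∀ x ∈ S, ∀ y ∈ S, ∀ t : ℝ, 0 < t → t < 1 → x + t • (y - x) ∈ S)
    (G y x : E) (σ : ℝ) (hx : x ∈ S)
    (h : ∀ X ∈ S, 0 ≤ inner ℝ G (X - x) + σ / 2 * (inner ℝ (X - y) (X - y) - inner ℝ (x - y) (x - y))) :
    ∀ X ∈ S, 0 ≤ inner ℝ (G + σ • (x - y)) (X - x) := by
  intro X hX
  have key : ∀ t : ℝ, 0 < t → t < 1 →
      0 ≤ inner ℝ (G + σ • (x - y)) (X - x) + t * (σ / 2 * inner ℝ (X - x) (X - x)) := by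
    intro t ht ht1
    have h1 := h _ (hconv x hx X hX t ht ht1)
    have e1 : x + t • (X - x) - y = (x - y) + t • (X - x) := by abel
    rw [e1] at h1
    simp only [add_sub_cancel_left, inner_add_left, inner_add_right, real_inner_smul_left,
      real_inner_smul_right] at h1 ⊢
    rw [real_inner_comm (x - y) (X - x)] at h1
    have : 0 ≤ t * (inner ℝ G (X - x) + σ * inner ℝ (x - y) (X - x) + t * (σ / 2 * inner ℝ (X - x) (X - x))) := by
      linarith
    exact (mul_nonneg_iff_of_pos_left ht).1 this
  have hl : Tendsto (fun t : ℝ => inner ℝ (G + σ • (x - y)) (X - x) + t * (σ / 2 * inner ℝ (X - x) (X - x)))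
      (𝓝[>] 0) (𝓝 (inner ℝ (G + σ • (x - y)) (X - x) + 0 * (σ / 2 * inner ℝ (X - x) (X - x)))) := by
    refine Tendsto.mono_left ?_ nhdsWithin_le_nhds
    exact tendsto_const_nhds.add (tendsto_id.mul_const _)
  rw [zero_mul, add_zero] at hl
  refine ge_of_tendsto hl ?_
  filter_upwards [Ioo_mem_nhdsGT (show (0:ℝ) < 1 by norm_num)] with t ht
  exact key t ht.1 ht.2

/-- On the active face, normal vectors vanish. -/
lemma normal_face {ι : Type*} [Finite ι] (S : Set E) (L0 : Submodule ℝ E) (ℓ : ι → E →ₗ[ℝ] ℝ)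
    (h2 : ∀ x ∈ S, ∀ d ∈ L0, (∀ a, 0 ≤ ℓ a (x + d)) → x + d ∈ S)
    (h3 : ∀ x ∈ S, ∀ a, 0 ≤ ℓ a x) (x : E) (hx : x ∈ S) (w : E)
    (hw : ∀ X ∈ S, 0 ≤ inner ℝ w (X - x)) (d : E) (hd : d ∈ L0) (hd' : ∀ a, ℓ a x = 0 → ℓ a d = 0) :
    inner ℝ w d = 0 := by
  have one : ∀ d ∈ L0, (∀ a, ℓ a x = 0 → ℓ a d = 0) → 0 ≤ inner ℝ w d := by
    intro d hd hd'
    have hev : ∀ᶠ t in 𝓝[>] (0:ℝ), ∀ a, 0 ≤ ℓ a (x + t • d) := by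
      refine eventually_all.2 fun a => ?_
      by_cases ha : ℓ a x = 0
      · exact Eventually.of_forall fun t => by simp [ha, hd' a ha]
      · have hpos : 0 < ℓ a x := lt_of_le_of_ne (h3 x hx a) (Ne.symm ha)
        have hl : Tendsto (fun t : ℝ => ℓ a x + t * ℓ a d) (𝓝[>] 0) (𝓝 (ℓ a x + 0 * ℓ a d)) :=
          Tendsto.mono_left (tendsto_const_nhds.add (tendsto_id.mul_const _)) nhdsWithin_le_nhds
        rw [zero_mul, add_zero] at hl
        filter_upwards [hl.eventually (lt_mem_nhds hpos)] with t ht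
        simpa using ht.le
    obtain ⟨t, ht, ht0⟩ := (hev.and self_mem_nhdsWithin).exists
    have := hw _ (h2 x hx _ (L0.smul_mem t hd) ht)
    rw [add_sub_cancel_left, real_inner_smul_right] at this
    exact (mul_nonneg_iff_of_pos_left ht0).1 this
  have a1 := one d hd hd'
  have a2 := one (-d) (L0.neg_mem hd) (fun a ha => by simp [hd' a ha])
  rw [inner_neg_right] at a2
  linarith

theorem abstract_conv [FiniteDimensional ℝ E] {m : ℕ} (hm : 0 < m) {ι : Type*} [Finite ι]
    (c : E) (M : E →L[ℝ] E) (hM : ∀ x y, inner ℝ (M x) y = inner ℝ x (M y))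
    (S : Set E) (L0 : Submodule ℝ E) (ℓ : ι → E →ₗ[ℝ] ℝ)
    (h1 : ∀ x ∈ S, ∀ y ∈ S, x - y ∈ L0)
    (h2 : ∀ x ∈ S, ∀ d ∈ L0, (∀ a, 0 ≤ ℓ a (x + d)) → x + d ∈ S)
    (h3 : ∀ x ∈ S, ∀ a, 0 ≤ ℓ a x) (hcl : IsClosed S) (R : ℝ) (hR : ∀ x ∈ S, ‖x‖ ≤ R)
    (σ : ℝ) (hσ : 0 < σ) (y z : ℕ → Fin m → E) (Fbar : ℝ)
    (hzS : ∀ k i, z k i ∈ S)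
    (hfoc : ∀ k i, ∀ X ∈ S,
      0 ≤ inner ℝ (aG c M (y (k + 1)) (y k) i + σ • (z (k + 1) i - y k i)) (X - z (k + 1) i))
    (hmono : ∀ k, aF c M (z (k + 1)) ≤ aF c M (z k))
    (hlim : Tendsto (fun k => aF c M (z k)) atTop (𝓝 Fbar))
    (hsum : Summable fun k => ‖z k - y k‖) :
    ∃ zs : Fin m → E, (∀ i, zs i ∈ S) ∧ (∀ i, ∀ X ∈ S, 0 ≤ inner ℝ (aG c M zs zs i) (X - zs i)) ∧
      Tendsto y atTop (𝓝 zs) := by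
  classical
  have hm1 : (1:ℝ) ≤ m := by exact_mod_cast hm
  have hge : ∀ k, Fbar ≤ aF c M (z k) := fun k => (antitone_nat_of_succ_le hmono).le_of_tendsto hlim k
  set ε : ℕ → ℝ := fun k => ‖z k - y k‖ with hε
  have hε0 : ∀ k, 0 ≤ ε k := fun k => norm_nonneg _
  set δ : ℕ → ℝ := fun k => ε k + ε (k + 1) with hδ
  have hδ0 : ∀ k, 0 ≤ δ k := fun k => add_nonneg (hε0 _) (hε0 _)
  have hδs : Summable δ := hsum.add ((summable_nat_add_iff 1).2 hsum)
  set D : ℕ → ℝ := fun k => ‖z k - z (k + 1)‖ with hD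
  have hD0 : ∀ k, 0 ≤ D k := fun k => norm_nonneg _
  set A : ℝ := m * ‖M‖ + σ with hA
  have hA0 : 0 ≤ A := by positivity
  -- descent
  have hdesc : ∀ k, σ * D k ^ 2 ≤
      (aF c M (z k) - Fbar) - (aF c M (z (k + 1)) - Fbar) + (m * A) * δ k * D k := by
    intro k
    have e0 : (aF c M (z k) - Fbar) - (aF c M (z (k + 1)) - Fbar)
        = ∑ i, inner ℝ (aG c M (z (k + 1)) (z k) i) (z k i - z (k + 1) i) := by
      rw [← aF_sub c M hM]; ring
    have hi : ∀ i, σ * ‖z k i - z (k + 1) i‖ ^ 2 - A * δ k * D k ≤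
        inner ℝ (aG c M (z (k + 1)) (z k) i) (z k i - z (k + 1) i) := by
      intro i
      have f1 := hfoc k i (z k i) (hzS k i)
      set d := z k i - z (k + 1) i with hd
      set w := aG c M (z (k + 1)) (z k) i - aG c M (y (k + 1)) (y k) i - σ • (z k i - y k i) with hw
      have e1 : aG c M (z (k + 1)) (z k) i
          = (aG c M (y (k + 1)) (y k) i + σ • (z (k + 1) i - y k i)) + (w + σ • d) := by
        rw [hw, hd]; module
      rw [e1, inner_add_left _ (w + σ • d), inner_add_left w, real_inner_smul_left,
        real_inner_self_eq_norm_sq]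
      have hwn : ‖w‖ ≤ A * δ k := by
        rw [hw]
        refine (norm_sub_le _ _).trans ?_
        have b1 := aG_bound c M (z (k + 1)) (z k) (y (k + 1)) (y k) i
        have b2 : ‖σ • (z k i - y k i)‖ ≤ σ * ε k := by
          rw [norm_smul, Real.norm_of_nonneg hσ.le]
          gcongr
          exact norm_le_pi_norm (z k - y k) i
        have b3 : σ * ε k ≤ σ * δ k := by
          gcongr; simp only [hδ]; linarith [hε0 (k + 1)]
        have b4 : ‖z (k + 1) - y (k + 1)‖ + ‖z k - y k‖ = δ k := by simp only [hδ, hε]; ring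
        rw [b4] at b1
        rw [hA, add_mul]; linarith
      have hdn : ‖d‖ ≤ D k := norm_le_pi_norm (z k - z (k + 1)) i
      have hwd : -(A * δ k * D k) ≤ inner ℝ w d := by
        have := abs_real_inner_le_norm w d
        have h5 : ‖w‖ * ‖d‖ ≤ A * δ k * D k :=
          mul_le_mul hwn hdn (norm_nonneg _) (mul_nonneg hA0 (hδ0 k))
        linarith [neg_abs_le (inner ℝ w d)]
      linarith
    have hs := Finset.sum_le_sum fun i (_ : i ∈ (univ : Finset (Fin m))) => hi i
    rw [← e0, sum_sub_distrib] at hs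
    obtain ⟨i0, hi0⟩ := exists_block_norm_eq hm (z k - z (k + 1))
    have hs1 : σ * D k ^ 2 ≤ ∑ i, σ * ‖z k i - z (k + 1) i‖ ^ 2 := by
      have := Finset.single_le_sum (f := fun i => σ * ‖z k i - z (k + 1) i‖ ^ 2)
        (fun i _ => by positivity) (mem_univ i0)
      simp only [hD]; rw [hi0]; exact this
    simp only [sum_const, card_univ, Fintype.card_fin, nsmul_eq_mul] at hs
    linarith
  -- residual
  set v : ℕ → Fin m → E := fun k i => aG c M (z (k + 1)) (z (k + 1)) i
    - (aG c M (y (k + 1)) (y k) i + σ • (z (k + 1) i - y k i)) with hv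
  have hvn : ∀ k i, ‖v k i‖ ≤ A * (D k + δ k) := by
    intro k i
    have e1 : v k i = (aG c M (z (k + 1)) (z (k + 1)) i - aG c M (y (k + 1)) (y k) i)
        - σ • (z (k + 1) i - y k i) := by simp only [hv]; abel
    have t1 : ‖z (k + 1) - y k‖ ≤ D k + ε k := by
      have : z (k + 1) - y k = -(z k - z (k + 1)) + (z k - y k) := by abel
      rw [this]
      refine (norm_add_le _ _).trans ?_
      rw [norm_neg]
    have b1 := aG_bound c M (z (k + 1)) (z (k + 1)) (y (k + 1)) (y k) i
    have b2 : ‖σ • (z (k + 1) i - y k i)‖ ≤ σ * (D k + δ k) := by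
      rw [norm_smul, Real.norm_of_nonneg hσ.le]
      gcongr
      refine (norm_le_pi_norm (z (k + 1) - y k) i).trans ?_
      simp only [hδ]; linarith [hε0 (k + 1)]
    have b3 : m * ‖M‖ * (‖z (k + 1) - y (k + 1)‖ + ‖z (k + 1) - y k‖)
        ≤ m * ‖M‖ * (D k + δ k) := by
      refine mul_le_mul_of_nonneg_left ?_ (by positivity)
      simp only [hδ]
      have : ‖z (k + 1) - y (k + 1)‖ = ε (k + 1) := rfl
      linarith
    rw [e1, hA, add_mul]
    exact (norm_sub_le _ _).trans (add_le_add (b1.trans b3) b2)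
  -- D tends to zero
  have hDle : ∀ k, D k ≤ R + R := fun k => by
    obtain ⟨i, hi⟩ := exists_block_norm_eq hm (z k - z (k + 1))
    simp only [hD]; rw [hi]
    exact (norm_sub_le _ _).trans (add_le_add (hR _ (hzS _ _)) (hR _ (hzS _ _)))
  have hδt : Tendsto δ atTop (𝓝 0) := hδs.tendsto_atTop_zero
  have hDt : Tendsto D atTop (𝓝 0) := by
    have hub : Tendsto (fun k => σ⁻¹ * ((aF c M (z k) - Fbar) - (aF c M (z (k + 1)) - Fbar)
        + (m * A) * δ k * (R + R))) atTop (𝓝 (σ⁻¹ * ((Fbar - Fbar) - (Fbar - Fbar)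
        + (m * A) * 0 * (R + R)))) := by
      refine Tendsto.const_mul _ (((hlim.sub_const _).sub
        (((tendsto_add_atTop_iff_nat 1).2 hlim).sub_const _)).add ?_)
      exact (hδt.const_mul _).mul_const _
    simp only [sub_self, mul_zero, zero_mul, add_zero] at hub
    have hsq : Tendsto (fun k => D k ^ 2) atTop (𝓝 0) := by
      refine squeeze_zero (fun k => sq_nonneg _) (fun k => ?_) hub
      rw [← div_eq_inv_mul, le_div_iff₀ hσ, mul_comm]
      refine (hdesc k).trans ?_
      have : m * A * δ k * D k ≤ m * A * δ k * (R + R) := by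
        have := hδ0 k
        have := hDle k
        gcongr
      linarith
    have := hsq.sqrt
    simpa [Real.sqrt_sq (hD0 _)] using this
  -- KL inequality
  let vf : ℕ → (Fin m → E) →L[ℝ] ℝ := fun k =>
    ∑ i, (innerSL ℝ (v k i)).comp (ContinuousLinearMap.proj i)
  have hvf : ∀ k d, vf k d = ∑ i, inner ℝ (v k i) (d i) := by
    intro k d; simp [vf]
  have hvfn : ∀ k, ‖vf k‖ ≤ m * (A * (D k + δ k)) := by
    intro k
    have hq : 0 ≤ A * (D k + δ k) := mul_nonneg hA0 (add_nonneg (hD0 k) (hδ0 k))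
    refine ContinuousLinearMap.opNorm_le_bound _ (by positivity) fun d => ?_
    rw [hvf]
    refine (norm_sum_le_of_le univ (f := fun i => inner ℝ (v k i) (d i))
      (n := fun _ => A * (D k + δ k) * ‖d‖) fun i _ => ?_).trans ?_
    · exact (norm_inner_le_norm _ _).trans
        (mul_le_mul (hvn k i) (norm_le_pi_norm d i) (norm_nonneg _) hq)
    · simp [mul_assoc]
  have hvf0 : Tendsto vf atTop (𝓝 0) := by
    refine squeeze_zero_norm (E := (Fin m → E) →L[ℝ] ℝ) hvfn ?_
    have := ((hDt.add hδt).const_mul A).const_mul (m : ℝ)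
    simpa using this
  let L : (Fin m → Set ι) → Submodule ℝ (Fin m → E) := fun J =>
    { carrier := {d | ∀ i, d i ∈ L0 ∧ ∀ a ∈ J i, ℓ a (d i) = 0}
      add_mem' := by
        intro x y hx hy i
        refine ⟨L0.add_mem (hx i).1 (hy i).1, fun a ha => ?_⟩
        simp [(hx i).2 a ha, (hy i).2 a ha]
      zero_mem' := by intro i; simp
      smul_mem' := by
        intro t x hx i
        refine ⟨L0.smul_mem _ (hx i).1, fun a ha => ?_⟩
        simp [(hx i).2 a ha] }
  have hLmem : ∀ J d, d ∈ L J ↔ ∀ i, d i ∈ L0 ∧ ∀ a ∈ J i, ℓ a (d i) = 0 := fun J d => Iff.rfl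
  obtain ⟨C, hC0, hC⟩ := kl_aux (J := Fin m → Set ι) (aB M) (aB_symm M hM) L (aF c M)
    (fun x d => ∑ i, inner ℝ (aG c M x x i) (d i))
    (by
      intro x y d
      rw [aB_apply, ← sum_add_distrib]
      refine sum_congr rfl fun i _ => ?_
      rw [← inner_add_left]
      congr 1
      simp only [aG, Pi.sub_apply, map_sub, sum_sub_distrib]; abel)
    (aF_quad c M hM) (fun k => z (k + 1)) (fun k i => {a | ℓ a (z (k + 1) i) = 0}) vf
    (by
      intro k k' hkk
      rw [hLmem]
      intro i
      refine ⟨h1 _ (hzS _ _) _ (hzS _ _), fun a ha => ?_⟩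
      have ha' : a ∈ (fun i => {a | ℓ a (z (k' + 1) i) = 0}) i := by
        have := congrFun hkk i
        exact Eq.mp (congrArg (fun s => a ∈ s) this) ha
      have q1 : ℓ a (z (k + 1) i) = 0 := ha
      have q2 : ℓ a (z (k' + 1) i) = 0 := ha'
      simp [q1, q2])
    (by
      intro k d hd
      rw [hLmem] at hd
      rw [hvf]
      refine sum_congr rfl fun i _ => ?_
      have := normal_face S L0 ℓ h2 h3 (z (k + 1) i) (hzS _ _) _ (hfoc k i) (d i) (hd i).1
        (fun a ha => (hd i).2 a ha)
      simp only [hv]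
      rw [inner_sub_left, this, sub_zero])
    hvf0 Fbar ((tendsto_add_atTop_iff_nat 1).2 hlim) R
    (fun k => by
      obtain ⟨i, hi⟩ := exists_block_norm_eq hm (z (k + 1))
      rw [hi]; exact hR _ (hzS _ _))
  -- summability
  have hDs : Summable D := by
    refine summable_main σ (m * A) (C * (m * A) ^ 2) hσ (by positivity) (by positivity) D δ
      (fun k => aF c M (z k) - Fbar) hD0 hδ0 hδs (fun k => sub_nonneg.2 (hge k))
      (fun k => sub_le_sub_right (hmono k) _) hdesc ?_
    filter_upwards [hC] with k hk
    refine hk.trans ?_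
    have : ‖vf k‖ ^ 2 ≤ (m * (A * (D k + δ k))) ^ 2 := by gcongr; exact hvfn k
    calc C * ‖vf k‖ ^ 2 ≤ C * (m * (A * (D k + δ k))) ^ 2 := by gcongr
      _ = _ := by ring
  have hcau : CauchySeq z := cauchySeq_of_summable_dist (by simpa [dist_eq_norm] using hDs)
  obtain ⟨zs, hzs⟩ := cauchySeq_tendsto_of_complete hcau
  have hyz : Tendsto y atTop (𝓝 zs) := by
    have h0 : Tendsto (fun k => z k - y k) atTop (𝓝 0) :=
      tendsto_zero_iff_norm_tendsto_zero.2 hsum.tendsto_atTop_zero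
    simpa using hzs.sub h0
  have hzi : ∀ i, Tendsto (fun k => z k i) atTop (𝓝 (zs i)) := fun i => tendsto_pi_nhds.1 hzs i
  have hyi : ∀ i, Tendsto (fun k => y k i) atTop (𝓝 (zs i)) := fun i => tendsto_pi_nhds.1 hyz i
  have hyi1 : ∀ i, Tendsto (fun k => y (k + 1) i) atTop (𝓝 (zs i)) :=
    fun i => (tendsto_add_atTop_iff_nat 1).2 (hyi i)
  have hzi1 : ∀ i, Tendsto (fun k => z (k + 1) i) atTop (𝓝 (zs i)) :=
    fun i => (tendsto_add_atTop_iff_nat 1).2 (hzi i)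
  refine ⟨zs, fun i => hcl.mem_of_tendsto (hzi i) (Eventually.of_forall fun k => hzS k i), ?_, hyz⟩
  intro i X hX
  have hGt : Tendsto (fun k => aG c M (y (k + 1)) (y k) i) atTop (𝓝 (aG c M zs zs i)) := by
    refine (tendsto_const_nhds.add (tendsto_finsetSum _ fun j _ => ?_)).add
      (tendsto_finsetSum _ fun j _ => ?_)
    · exact (M.continuous.tendsto _).comp (hyi1 j)
    · exact (M.continuous.tendsto _).comp (hyi j)
  have ht : Tendsto (fun k => inner ℝ (aG c M (y (k + 1)) (y k) i + σ • (z (k + 1) i - y k i))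
      (X - z (k + 1) i)) atTop
      (𝓝 (inner ℝ (aG c M zs zs i + σ • (zs i - zs i)) (X - zs i))) :=
    Tendsto.inner (hGt.add (((hzi1 i).sub (hyi i)).const_smul σ)) (tendsto_const_nhds.sub (hzi1 i))
  rw [sub_self, smul_zero, add_zero] at ht
  exact ge_of_tendsto' ht fun k => hfoc k i X hX

end abstractBlocks

section concreteBlocks

/-- a matrix as a Euclidean vector -/
def toE {K : ℕ} (A : Matrix (Fin K) (Fin K) ℝ) : EuclideanSpace ℝ (Fin K × Fin K) :=
  WithLp.toLp 2 (fun p => A p.1 p.2)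

/-- a Euclidean vector as a matrix -/
def ofE {K : ℕ} (x : EuclideanSpace ℝ (Fin K × Fin K)) : Matrix (Fin K) (Fin K) ℝ :=
  fun a b => x (a, b)

lemma ofE_toE {K : ℕ} (A : Matrix (Fin K) (Fin K) ℝ) : ofE (toE A) = A := rfl

lemma toE_ofE {K : ℕ} (x : EuclideanSpace ℝ (Fin K × Fin K)) : toE (ofE x) = x := rfl

lemma toE_apply {K : ℕ} (A : Matrix (Fin K) (Fin K) ℝ) (p : Fin K × Fin K) :
    toE A p = A p.1 p.2 := rfl

lemma toE_add {K : ℕ} (A B : Matrix (Fin K) (Fin K) ℝ) : toE (A + B) = toE A + toE B := rfl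

lemma toE_sub {K : ℕ} (A B : Matrix (Fin K) (Fin K) ℝ) : toE (A - B) = toE A - toE B := rfl

lemma toE_smul {K : ℕ} (t : ℝ) (A : Matrix (Fin K) (Fin K) ℝ) : toE (t • A) = t • toE A := rfl

lemma ofE_add {K : ℕ} (x y : EuclideanSpace ℝ (Fin K × Fin K)) : ofE (x + y) = ofE x + ofE y := rfl

lemma ofE_smul {K : ℕ} (t : ℝ) (x : EuclideanSpace ℝ (Fin K × Fin K)) :
    ofE (t • x) = t • ofE x := rfl

lemma toE_sum {K : ℕ} {ι : Type*} (s : Finset ι) (A : ι → Matrix (Fin K) (Fin K) ℝ) :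
    toE (∑ i ∈ s, A i) = ∑ i ∈ s, toE (A i) := by
  let φ : Matrix (Fin K) (Fin K) ℝ →+ EuclideanSpace ℝ (Fin K × Fin K) :=
    { toFun := toE, map_zero' := rfl, map_add' := toE_add }
  exact map_sum φ A s

lemma mip_eq_sum {K : ℕ} (A B : Matrix (Fin K) (Fin K) ℝ) :
    mip A B = ∑ p : Fin K × Fin K, A p.1 p.2 * B p.1 p.2 := by
  rw [mip, Matrix.trace, Fintype.sum_prod_type_right]
  simp [Matrix.mul_apply]

lemma inner_toE {K : ℕ} (A B : Matrix (Fin K) (Fin K) ℝ) : inner ℝ (toE A) (toE B) = mip A B := by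
  rw [mip_eq_sum, PiLp.inner_apply]
  simp [toE_apply, mul_comm]

/-- the linear operator of the interaction term, on matrices -/
def opM {K : ℕ} (e ϱ : Fin K → ℝ) (C : Matrix (Fin K) (Fin K) ℝ) (β : ℝ)
    (X : Matrix (Fin K) (Fin K) ℝ) : Matrix (Fin K) (Fin K) ℝ :=
  diagonal e * diagonal ϱ * X * diagonal e * C * diagonal e + β • X

lemma mip_opM {K : ℕ} (e ϱ : Fin K → ℝ) (C : Matrix (Fin K) (Fin K) ℝ) (hC : Cᵀ = C) (β : ℝ)
    (X Y : Matrix (Fin K) (Fin K) ℝ) : mip (opM e ϱ C β X) Y = mip X (opM e ϱ C β Y) := by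
  simp only [mip, opM, transpose_add, transpose_smul, add_mul, mul_add, trace_add, transpose_mul,
    diagonal_transpose, hC, Matrix.smul_mul, Matrix.mul_smul]
  congr 1
  have e1 : diagonal e * (C * (diagonal e * (Xᵀ * (diagonal ϱ * diagonal e)))) * Y
      = (diagonal e * C * diagonal e) * (Xᵀ * diagonal ϱ * diagonal e * Y) := by
    simp only [Matrix.mul_assoc]
  rw [e1, trace_mul_comm]
  have e2 : diagonal ϱ * diagonal e = diagonal e * diagonal ϱ := by
    simp [diagonal_mul_diagonal, mul_comm]
  congr 1
  simp only [Matrix.mul_assoc]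
  rw [← Matrix.mul_assoc (diagonal ϱ), e2]
  simp only [Matrix.mul_assoc]

/-- the linear operator of the interaction term -/
def opE {K : ℕ} (e ϱ : Fin K → ℝ) (C : Matrix (Fin K) (Fin K) ℝ) (β : ℝ) :
    EuclideanSpace ℝ (Fin K × Fin K) →L[ℝ] EuclideanSpace ℝ (Fin K × Fin K) :=
  LinearMap.toContinuousLinearMap
    { toFun := fun x => toE (opM e ϱ C β (ofE x))
      map_add' := by
        intro x y
        rw [← toE_add, ofE_add]
        congr 1
        simp only [opM, Matrix.mul_add, Matrix.add_mul, smul_add]; abel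
      map_smul' := by
        intro t x
        rw [RingHom.id_apply, ← toE_smul, ofE_smul]
        congr 1
        simp only [opM, Matrix.mul_smul, Matrix.smul_mul, smul_add, smul_comm t β] }

lemma opE_apply {K : ℕ} (e ϱ : Fin K → ℝ) (C : Matrix (Fin K) (Fin K) ℝ) (β : ℝ)
    (X : Matrix (Fin K) (Fin K) ℝ) : opE e ϱ C β (toE X) = toE (opM e ϱ C β X) := rfl

lemma opE_symm {K : ℕ} (e ϱ : Fin K → ℝ) (C : Matrix (Fin K) (Fin K) ℝ) (hC : Cᵀ = C) (β : ℝ)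
    (x y : EuclideanSpace ℝ (Fin K × Fin K)) :
    inner ℝ (opE e ϱ C β x) y = inner ℝ x (opE e ϱ C β y) := by
  rw [← toE_ofE x, ← toE_ofE y, opE_apply, opE_apply, inner_toE, inner_toE, mip_opM _ _ _ hC]

/-- linear coefficient -/
def cE {K : ℕ} (e ϱ : Fin K → ℝ) (C : Matrix (Fin K) (Fin K) ℝ) :
    EuclideanSpace ℝ (Fin K × Fin K) :=
  toE (diagonal ϱ * diagonal e * C * diagonal e)

lemma mip_add_right {K : ℕ} (A B D : Matrix (Fin K) (Fin K) ℝ) :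
    mip A (B + D) = mip A B + mip A D := by
  simp [mip, mul_add]

lemma mip_smul_right {K : ℕ} (t : ℝ) (A B : Matrix (Fin K) (Fin K) ℝ) :
    mip A (t • B) = t * mip A B := by
  simp [mip]

lemma fB_eq {K m : ℕ} (e ϱ : Fin K → ℝ) (C : Matrix (Fin K) (Fin K) ℝ) (β : ℝ)
    (Z : Fin m → Matrix (Fin K) (Fin K) ℝ) :
    fB e ϱ C β Z = aF (cE e ϱ C) (opE e ϱ C β) (fun i => toE (Z i)) := by
  simp only [fB, fE, aF, cE, opE_apply, inner_toE, opM, mip_add_right, mip_smul_right,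
    sum_add_distrib, mul_sum]
  ring

lemma gradB_eq {K m : ℕ} (e ϱ : Fin K → ℝ) (C : Matrix (Fin K) (Fin K) ℝ) (β : ℝ)
    (Z : Fin m → Matrix (Fin K) (Fin K) ℝ) (i : Fin m) :
    toE (gradB e ϱ C β Z i)
      = aG (cE e ϱ C) (opE e ϱ C β) (fun i => toE (Z i)) (fun i => toE (Z i)) i := by
  simp only [aG, cE, opE_apply, ← toE_sum, ← toE_add]
  congr 1
  have e2 : diagonal ϱ * diagonal e = diagonal e * diagonal ϱ := by
    simp [diagonal_mul_diagonal, mul_comm]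
  have e3 : (univ : Finset (Fin m)).erase i = (Iio i) ∪ (Ioi i) := by
    ext j; simp
  have e4 : Disjoint (Iio i) (Ioi i) := by
    rw [Finset.disjoint_left]; intro j h1 h2
    exact absurd (mem_Iio.1 h1) (not_lt.2 (mem_Ioi.1 h2).le)
  rw [gradB, e3, sum_union e4]
  simp only [opM, sum_add_distrib, smul_add, smul_sum, e2]
  abel

lemma block_diff {E : Type*} [NormedAddCommGroup E] [InnerProductSpace ℝ E] {m : ℕ}
    (c : E) (M : E →L[ℝ] E) (hM : ∀ x y, inner ℝ (M x) y = inner ℝ x (M y))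
    (old new : Fin m → E) (i : Fin m) (X Y : E) :
    aF c M (fun j => if j < i then new j else if j = i then X else old j)
      - aF c M (fun j => if j < i then new j else if j = i then Y else old j)
      = inner ℝ (aG c M new old i) (X - Y) := by
  rw [aF_sub c M hM, Finset.sum_eq_single i]
  · simp only [lt_irrefl, if_false, if_true]
    congr 1
    simp only [aG]
    congr 1
    · congr 1
      refine sum_congr rfl fun j hj => ?_
      rw [if_pos (mem_Iio.1 hj)]
    · refine sum_congr rfl fun j hj => ?_
      have := mem_Ioi.1 hj
      rw [if_neg (not_lt.2 this.le), if_neg this.ne']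
  · intro j _ hj
    simp only [if_neg hj, sub_self, inner_zero_right]
  · simp

/-- `S` in Euclidean coordinates -/
def SE {K : ℕ} (e ϱ : Fin K → ℝ) : Set (EuclideanSpace ℝ (Fin K × Fin K)) :=
  {x | ofE x ∈ Sset e ϱ}

lemma mem_SE {K : ℕ} (e ϱ : Fin K → ℝ) (x : EuclideanSpace ℝ (Fin K × Fin K)) :
    x ∈ SE e ϱ ↔ (∀ a, ∑ b, x (a, b) * e b = 1) ∧ (∀ b, ∑ a, x (a, b) * (e a * ϱ a) = ϱ b) ∧
      ∑ a, x (a, a) = 0 ∧ ∀ p, 0 ≤ x p := by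
  simp only [SE, Sset, Set.mem_setOf_eq, funext_iff, Prod.forall]
  rfl

/-- direction space of `S` -/
def LE0 {K : ℕ} (e ϱ : Fin K → ℝ) : Submodule ℝ (EuclideanSpace ℝ (Fin K × Fin K)) where
  carrier := {x | (∀ a, ∑ b, x (a, b) * e b = 0) ∧ (∀ b, ∑ a, x (a, b) * (e a * ϱ a) = 0) ∧
      ∑ a, x (a, a) = 0}
  add_mem' := by
    rintro x y ⟨h1, h2, h3⟩ ⟨h1', h2', h3'⟩
    refine ⟨fun a => ?_, fun a => ?_, ?_⟩
    · simp [add_mul, sum_add_distrib, h1, h1']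
    · simp [add_mul, sum_add_distrib, h2, h2']
    · simp [sum_add_distrib, h3, h3']
  zero_mem' := by simp
  smul_mem' := by
    rintro t x ⟨h1, h2, h3⟩
    refine ⟨fun a => ?_, fun a => ?_, ?_⟩
    · simp [mul_assoc, ← mul_sum, h1]
    · simp [mul_assoc, ← mul_sum, h2]
    · simp [← mul_sum, h3]

lemma mem_LE0 {K : ℕ} (e ϱ : Fin K → ℝ) (x : EuclideanSpace ℝ (Fin K × Fin K)) :
    x ∈ LE0 e ϱ ↔ (∀ a, ∑ b, x (a, b) * e b = 0) ∧ (∀ b, ∑ a, x (a, b) * (e a * ϱ a) = 0) ∧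
      ∑ a, x (a, a) = 0 := Iff.rfl

lemma SE_closed {K : ℕ} (e ϱ : Fin K → ℝ) : IsClosed (SE e ϱ) := by
  have : SE e ϱ = {x | ∀ a, ∑ b, x (a, b) * e b = 1} ∩
      ({x | ∀ b, ∑ a, x (a, b) * (e a * ϱ a) = ϱ b} ∩
      ({x | ∑ a, x (a, a) = 0} ∩ {x | ∀ p, 0 ≤ x p})) := by
    ext x; exact mem_SE e ϱ x
  rw [this]
  refine IsClosed.inter ?_ (IsClosed.inter ?_ (IsClosed.inter ?_ ?_))
  · simp only [Set.setOf_forall]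
    exact isClosed_iInter fun a => isClosed_eq (by fun_prop) (by fun_prop)
  · simp only [Set.setOf_forall]
    exact isClosed_iInter fun a => isClosed_eq (by fun_prop) (by fun_prop)
  · exact isClosed_eq (by fun_prop) (by fun_prop)
  · simp only [Set.setOf_forall]
    exact isClosed_iInter fun a => isClosed_le (by fun_prop) (by fun_prop)

lemma SE_bdd {K : ℕ} (e ϱ : Fin K → ℝ) (he : ∀ a, 0 < e a) :
    ∃ R : ℝ, ∀ x ∈ SE e ϱ, ‖x‖ ≤ R := by
  refine ⟨√(∑ p : Fin K × Fin K, (1 / e p.2) ^ 2), fun x hx => ?_⟩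
  obtain ⟨h1, -, -, h4⟩ := (mem_SE e ϱ x).1 hx
  rw [EuclideanSpace.norm_eq]
  refine Real.sqrt_le_sqrt (sum_le_sum fun p _ => ?_)
  rw [Real.norm_of_nonneg (h4 p)]
  have : x p ≤ 1 / e p.2 := by
    rw [le_div_iff₀ (he _), ← h1 p.1]
    exact single_le_sum (f := fun b => x (p.1, b) * e b)
      (fun b _ => mul_nonneg (h4 _) (he b).le) (mem_univ p.2)
  have := h4 p
  gcongr

lemma norm_toE_le {K m : ℕ} (Z : Fin m → Matrix (Fin K) (Fin K) ℝ) :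
    ‖(fun i => toE (Z i))‖ ≤ nZ Z := by
  refine (pi_norm_le_iff_of_nonneg (Real.sqrt_nonneg _)).2 fun i => ?_
  refine Real.le_sqrt_of_sq_le ?_
  rw [← real_inner_self_eq_norm_sq, inner_toE]
  refine single_le_sum (f := fun i => mip (Z i) (Z i)) (fun j _ => ?_) (mem_univ i)
  rw [← inner_toE]
  exact real_inner_self_nonneg

lemma tendsto_of_toE {K m : ℕ} (Z : ℕ → Fin m → Matrix (Fin K) (Fin K) ℝ)
    (zs : Fin m → EuclideanSpace ℝ (Fin K × Fin K))
    (h : Tendsto (fun k i => toE (Z k i)) atTop (𝓝 zs)) :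
    Tendsto Z atTop (𝓝 fun i => ofE (zs i)) := by
  rw [tendsto_pi_nhds]
  intro i
  have hi : Tendsto (fun k => toE (Z k i)) atTop (𝓝 (zs i)) := tendsto_pi_nhds.1 h i
  refine tendsto_pi_nhds.2 fun a => tendsto_pi_nhds.2 fun b => ?_
  have hc : Continuous fun x : EuclideanSpace ℝ (Fin K × Fin K) => x (a, b) := by fun_prop
  exact (hc.tendsto _).comp hi

theorem concrete_conv {K m : ℕ} (hm : 0 < m)
    (e ϱ : Fin K → ℝ) (he : ∀ a, 0 < e a)
    (C : Matrix (Fin K) (Fin K) ℝ) (hCsym : Cᵀ = C) (β : ℝ) (σ : ℝ) (hσ : 0 < σ)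
    (Zseq Zbar : ℕ → Fin m → Matrix (Fin K) (Fin K) ℝ) (Fbar : ℝ)
    (hopt : IsBlockOpt e ϱ C β σ Zseq Zbar)
    (hmono : ∀ k : ℕ, 1 ≤ k → fB e ϱ C β (Zbar (k + 1)) ≤ fB e ϱ C β (Zbar k))
    (hlim : Tendsto (fun k : ℕ => fB e ϱ C β (Zbar (k + 1))) atTop (nhds Fbar))
    (hsum : Summable (fun k : ℕ => nZ (Zbar (k + 1) - Zseq (k + 1)))) :
    ∃ Zstar : Fin m → Matrix (Fin K) (Fin K) ℝ,
      IsKKT e ϱ C β Zstar ∧ Tendsto Zseq atTop (nhds Zstar) := by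
  obtain ⟨R, hR⟩ := SE_bdd e ϱ he
  have hM := opE_symm e ϱ C hCsym β
  let ℓ : Fin K × Fin K → EuclideanSpace ℝ (Fin K × Fin K) →ₗ[ℝ] ℝ := fun p =>
    { toFun := fun x => x p, map_add' := fun _ _ => rfl, map_smul' := fun _ _ => rfl }
  have hℓ : ∀ p x, ℓ p x = x p := fun _ _ => rfl
  have h1 : ∀ x ∈ SE e ϱ, ∀ y ∈ SE e ϱ, x - y ∈ LE0 e ϱ := by
    intro x hx y hy
    obtain ⟨a1, a2, a3, -⟩ := (mem_SE e ϱ x).1 hx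
    obtain ⟨b1, b2, b3, -⟩ := (mem_SE e ϱ y).1 hy
    refine (mem_LE0 e ϱ _).2 ⟨fun a => ?_, fun a => ?_, ?_⟩
    · simp [sub_mul, sum_sub_distrib, a1, b1]
    · simp [sub_mul, sum_sub_distrib, a2, b2]
    · simp [sum_sub_distrib, a3, b3]
  have h2 : ∀ x ∈ SE e ϱ, ∀ d ∈ LE0 e ϱ, (∀ a, 0 ≤ ℓ a (x + d)) → x + d ∈ SE e ϱ := by
    intro x hx d hd hp
    obtain ⟨a1, a2, a3, -⟩ := (mem_SE e ϱ x).1 hx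
    obtain ⟨b1, b2, b3⟩ := (mem_LE0 e ϱ d).1 hd
    refine (mem_SE e ϱ _).2 ⟨fun a => ?_, fun a => ?_, ?_, hp⟩
    · simp [add_mul, sum_add_distrib, a1, b1]
    · simp [add_mul, sum_add_distrib, a2, b2]
    · simp [sum_add_distrib, a3, b3]
  have h3 : ∀ x ∈ SE e ϱ, ∀ a, 0 ≤ ℓ a x := fun x hx => ((mem_SE e ϱ x).1 hx).2.2.2
  have hconv : ∀ x ∈ SE e ϱ, ∀ y ∈ SE e ϱ, ∀ t : ℝ, 0 < t → t < 1 → x + t • (y - x) ∈ SE e ϱ := by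
    intro x hx y hy t ht ht1
    refine h2 x hx _ ((LE0 e ϱ).smul_mem t (h1 y hy x hx)) fun a => ?_
    have q1 := h3 x hx a
    have q2 := h3 y hy a
    simp only [map_add, map_smul, map_sub, smul_eq_mul]
    nlinarith [mul_nonneg (sub_nonneg.2 ht1.le) q1, mul_nonneg ht.le q2]
  have hfoc : ∀ k i, ∀ X ∈ SE e ϱ, 0 ≤ inner ℝ (aG (cE e ϱ C) (opE e ϱ C β)
      (fun j => toE (Zseq (k + 1) j)) (fun j => toE (Zseq k j)) i
      + σ • (toE (Zbar (k + 1) i) - toE (Zseq k i))) (X - toE (Zbar (k + 1) i)) := by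
    intro k i
    refine foc (SE e ϱ) hconv _ _ _ σ (hopt k i).1 fun X hX => ?_
    have h := (hopt k i).2 (ofE X) hX
    have hite : ∀ W : Matrix (Fin K) (Fin K) ℝ,
        fB e ϱ C β (fun j => if j < i then Zseq (k + 1) j else if j = i then W else Zseq k j)
        = aF (cE e ϱ C) (opE e ϱ C β) (fun j => if j < i then toE (Zseq (k + 1) j)
            else if j = i then toE W else toE (Zseq k j)) := by
      intro W
      rw [fB_eq]
      congr 1
      funext j
      split_ifs <;> rfl
    rw [blockObj, blockObj, hite, hite, ← inner_toE, ← inner_toE, toE_sub, toE_sub, toE_ofE] at h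
    have hd := block_diff (cE e ϱ C) (opE e ϱ C β) hM (fun j => toE (Zseq k j))
      (fun j => toE (Zseq (k + 1) j)) i X (toE (Zbar (k + 1) i))
    rw [← hd]
    linarith
  obtain ⟨zs, hzS, hkkt, hconvg⟩ := abstract_conv hm (cE e ϱ C) (opE e ϱ C β) hM (SE e ϱ) (LE0 e ϱ) ℓ
    h1 h2 h3 (SE_closed e ϱ) R hR σ hσ (fun k i => toE (Zseq (k + 1) i))
    (fun k i => toE (Zbar (k + 1) i)) Fbar (fun k i => (hopt k i).1)
    (fun k i => hfoc (k + 1) i)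
    (fun k => by rw [← fB_eq, ← fB_eq]; exact hmono (k + 1) (by omega))
    (by simpa only [← fB_eq] using hlim)
    (Summable.of_nonneg_of_le (fun k => norm_nonneg _)
      (fun k => norm_toE_le (Zbar (k + 1) - Zseq (k + 1))) hsum)
  refine ⟨fun i => ofE (zs i), ⟨hzS, fun i X hX => ?_⟩, ?_⟩
  · rw [← inner_toE, gradB_eq]
    exact hkkt i (toE X) hX
  · exact (tendsto_add_atTop_iff_nat 1).1 (tendsto_of_toE (fun k => Zseq (k + 1)) zs hconvg)

end concreteBlocks

/-- Theorem 3.2, part 1.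
There is a threshold `σ₀ > 0` such that for every `σ ≥ σ₀`, any inexact PBCD sequence
`{Z^{(k)}}` whose block-optimal sequence `{Z̄^{(k)}}` satisfies (i) `{f_β(Z̄^{(k)})}` is
nonincreasing with limit `F̄` and `f_β(Z̄^{(k)}) > F̄` for all `k ≥ 1`, and
(ii) `Σ_{k≥1} ‖Z̄^{(k)} − Z^{(k)}‖_F < ∞`, converges to a KKT point of `(P_β)`. -/
theorem pbcd_inexact_convergence_to_KKT
    (K N : ℕ) (hK : 1 ≤ K) (hN : 3 ≤ N)
    (e ϱ : Fin K → ℝ) (he : ∀ a, 0 < e a) (hϱ : ∀ a, 0 ≤ ϱ a)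
    (C : Matrix (Fin K) (Fin K) ℝ) (hCsym : Cᵀ = C)
    (hC0 : ∀ a b, 0 ≤ C a b) (hCd : ∀ a, C a a = 0)
    (hS : (Sset e ϱ).Nonempty)
    (β : ℝ) (hβ : 0 < β) :
    ∃ σ₀ : ℝ, 0 < σ₀ ∧ ∀ σ : ℝ, σ₀ ≤ σ →
      ∀ (Zseq Zbar : ℕ → Fin (N - 1) → Matrix (Fin K) (Fin K) ℝ) (Fbar : ℝ),
        IsBlockOpt e ϱ C β σ Zseq Zbar →
        (∀ k : ℕ, 1 ≤ k → fB e ϱ C β (Zbar (k + 1)) ≤ fB e ϱ C β (Zbar k)) →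
        Tendsto (fun k : ℕ => fB e ϱ C β (Zbar (k + 1))) atTop (nhds Fbar) →
        (∀ k : ℕ, 1 ≤ k → Fbar < fB e ϱ C β (Zbar k)) →
        Summable (fun k : ℕ => nZ (Zbar (k + 1) - Zseq (k + 1))) →
        ∃ Zstar : Fin (N - 1) → Matrix (Fin K) (Fin K) ℝ,
          IsKKT e ϱ C β Zstar ∧ Tendsto Zseq atTop (nhds Zstar) := by
  refine ⟨1, one_pos, fun σ hσ Zseq Zbar Fbar hopt hmono hlim _ hsum => ?_⟩
  exact concrete_conv (by omega) e ϱ he C hCsym β σ (by linarith) Zseq Zbar Fbar hopt hmono hlim hsum
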